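/- Let p be an odd prime and k ≥ 0 an integer. In the polynomial ring 𝔽_p[t₁, t₂], the element ∏_{a=0}^{k} ((t₁ − t₂^{p^{2a+1}})·(t₂ − t₁^{p^{2a+1}}))^{p^{k−a}} − (t₁·t₂)^{(p^{k+1} − 1)/(p − 1)} lies in the ideal (t₁, t₂)^{p^{k+1}}; that is, the product is congruent to (t₁t₂)^{(p^{k+1}−1)/(p−1)} modulo terms of total degree ≥ p^{k+1}. -/

import Mathlib

open MvPolynomial

/-!
In characteristic `p` the Frobenius gives `(x - y ^ p ^ m) ^ p ^ n = x ^ p ^ n - y ^ p ^ (m + n)`,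
so for `y ∈ I` the correction term disappears modulo `I ^ p ^ N` as soon as `N ≤ m + n`.
With `m = 2a + 1` and `n = k - a` one has `m + n = k + 1 + a`, so `N = k + 1` works for every
factor, and the exponents `p ^ (k - a)` add up to a geometric sum.
-/

section ExpChar

variable {R : Type*} [CommRing R] {p : ℕ} [ExpChar R p] {I : Ideal R} {y : R}

theorem sub_pow_expChar_pow_smodEq (x : R) (hy : y ∈ I) {m n N : ℕ} (hN : N ≤ m + n) :
    (x - y ^ p ^ m) ^ p ^ n ≡ x ^ p ^ n [SMOD I ^ p ^ N] := by
  have frobenius_sub : (x - y ^ p ^ m) ^ p ^ n - x ^ p ^ n = -y ^ p ^ (m + n) := by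
    rw [sub_pow_expChar_pow, ← pow_mul, ← pow_add, sub_sub_cancel_left]
  have exponent_le : p ^ N ≤ p ^ (m + n) := Nat.pow_le_pow_right (expChar_pos R p) hN
  rw [SModEq.sub_mem, frobenius_sub]
  exact neg_mem (Ideal.pow_le_pow_right exponent_le (Ideal.pow_mem_pow hy _))

theorem prod_sub_pow_expChar_pow_smodEq {ι : Type*} (s : Finset ι) (x : R) (hy : y ∈ I)
    {m n : ι → ℕ} {N : ℕ} (hN : ∀ a ∈ s, N ≤ m a + n a) :
    ∏ a ∈ s, (x - y ^ p ^ m a) ^ p ^ n a ≡ x ^ ∑ a ∈ s, p ^ n a [SMOD I ^ p ^ N] := by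
  rw [← Finset.prod_pow_eq_pow_sum]
  exact SModEq.prod fun a ha ↦ sub_pow_expChar_pow_smodEq x hy (hN a ha)

end ExpChar

theorem sum_range_pow_sub_eq_div {q : ℕ} (hq : 2 ≤ q) (k : ℕ) :
    ∑ a ∈ Finset.range (k + 1), q ^ (k - a) = (q ^ (k + 1) - 1) / (q - 1) := by
  rw [← Nat.geomSum_eq hq]
  exact Finset.sum_range_reflect (q ^ ·) (k + 1)

theorem statement15_general {R : Type*} [CommRing R] (p : ℕ) (hp : p.Prime) [CharP R p]
    {I : Ideal R} {x y : R} (hx : x ∈ I) (hy : y ∈ I) (k : ℕ) :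
    (∏ a ∈ Finset.range (k + 1),
        ((x - y ^ p ^ (2 * a + 1)) * (y - x ^ p ^ (2 * a + 1))) ^ p ^ (k - a)) -
      (x * y) ^ ((p ^ (k + 1) - 1) / (p - 1)) ∈ I ^ p ^ (k + 1) := by
  have : ExpChar R p := .prime hp
  have frobenius_exponent_le : ∀ a ∈ Finset.range (k + 1), k + 1 ≤ 2 * a + 1 + (k - a) :=
    fun a _ ↦ by omega
  rw [← SModEq.sub_mem, ← sum_range_pow_sub_eq_div hp.two_le]
  simp only [mul_pow, Finset.prod_mul_distrib]
  exact (prod_sub_pow_expChar_pow_smodEq _ x hy frobenius_exponent_le).mul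
    (prod_sub_pow_expChar_pow_smodEq _ y hx frobenius_exponent_le)

/-- Let `p` be an odd prime and `k ≥ 0`. In `𝔽_p[t₁, t₂]`,
`∏_{a=0}^{k} ((t₁ − t₂^{p^{2a+1}})(t₂ − t₁^{p^{2a+1}}))^{p^{k−a}}`
is congruent to `(t₁t₂)^{(p^{k+1}−1)/(p−1)}` modulo the ideal `(t₁, t₂)^{p^{k+1}}`. -/
theorem statement15 (p : ℕ) (hp : p.Prime) (hodd : Odd p) (k : ℕ) :
    (∏ a ∈ Finset.range (k + 1),
        (((X 0 : MvPolynomial (Fin 2) (ZMod p)) - X 1 ^ p ^ (2 * a + 1)) *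
          (X 1 - X 0 ^ p ^ (2 * a + 1))) ^ p ^ (k - a)) -
      (X 0 * X 1) ^ ((p ^ (k + 1) - 1) / (p - 1)) ∈
      (Ideal.span {(X 0 : MvPolynomial (Fin 2) (ZMod p)), X 1}) ^ p ^ (k + 1) :=
  statement15_general p hp (Ideal.subset_span (.inl rfl)) (Ideal.subset_span (.inr rfl)) k
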